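/- Fix m with 3/2 < m < 2. There is a constant C < ∞ such that for every z ∈ bD_m: ∫_{bD_m} |Re w₁|^{m−2} · |w−z|^{−2} dH³(w) ≤ C. In particular this integral is finite for every z ∈ bD_m. -/

import Mathlib

open MeasureTheory Complex
open scoped ENNReal

noncomputable section

/-- `ℂ²` with the Euclidean metric. -/
abbrev C2 := EuclideanSpace ℂ (Fin 2)

instance : MeasurableSpace C2 := borel _
instance : BorelSpace C2 := ⟨rfl⟩

/-- The defining function `ρ(w) = |w₂|² + |Re w₁|^m + (Im w₁)² − 1`. -/
def rhom (m : ℝ) (w : C2) : ℝ := ‖w 1‖ ^ 2 + |(w 0).re| ^ m + (w 0).im ^ 2 - 1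

/-- The domain `D_m = {ρ < 0}`. -/
def Dm (m : ℝ) : Set C2 := {w | rhom m w < 0}

/-- The boundary `bD_m = {ρ = 0}`. -/
def bDm (m : ℝ) : Set C2 := {w | rhom m w = 0}

/-- The Cauchy–Leray denominator
`Δ(w,z) = ((m/2)|u₁|^{m−1}·sgn(u₁) − i v₁)(w₁−z₁) + conj(w₂)(w₂−z₂)`. -/
def Deltam (m : ℝ) (w z : C2) : ℂ :=
  ((m / 2 * |(w 0).re| ^ (m - 1) * Real.sign (w 0).re : ℝ) - I * ((w 0).im : ℂ))
      * (w 0 - z 0)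
    + (starRingEnd ℂ) (w 1) * (w 1 - z 1)

/-- The real gradient `∇ρ` on `ℝ⁴ ≅ ℂ²`, written as a vector in `ℂ²`:
`∇ρ(w) = (m|u₁|^{m−1} sgn(u₁) + 2i v₁, 2w₂)`. -/
def gradRhom (m : ℝ) (w : C2) : C2 :=
  (WithLp.equiv 2 (Fin 2 → ℂ)).symm
    ![(m * |(w 0).re| ^ (m - 1) * Real.sign (w 0).re : ℝ)
        + (2 * (w 0).im : ℝ) * I, 2 * w 1]

/-- The inward unit normal `N(z) = −∇ρ(z)/|∇ρ(z)|`. -/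
def Nm (m : ℝ) (z : C2) : C2 := (-‖gradRhom m z‖⁻¹ : ℝ) • gradRhom m z

/-!
The real coordinates `(u₁, v₁, u₂, v₂)` identify `bD_m` with the superellipsoid
`|x₀|^m + x₁² + x₂² + x₃² = 1`. Where one term of the sum is at least the average `1/4`, the
corresponding coordinate is a Lipschitz function of the other three on each sign, because `|t|^p` is
Lipschitz on `[-1, 1]` for `p ≥ 1` and has a Lipschitz inverse away from `0`. Forgetting that
coordinate reduces the estimate to Lebesgue measure on a cube of `ℝ³`: distances only shrink, so
negative powers of them grow, and a weight in the forgotten coordinate is bounded.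

On the cube, `|x - z|^(-β) ≤ ∏ |xⱼ - zⱼ|^(-bⱼ)` whenever `∑ bⱼ = β` and `bⱼ ≥ 0`, and
`|xⱼ|^(-αⱼ) |xⱼ - zⱼ|^(-bⱼ) ≤ |xⱼ|^(-(αⱼ + bⱼ)) + |xⱼ - zⱼ|^(-(αⱼ + bⱼ))`. If every `αⱼ < 1` and
`∑ αⱼ + β` is below the dimension, the `bⱼ` can be chosen with `αⱼ + bⱼ < 1`, and Tonelli's theorem
leaves integrable powers of one real variable. For `α = (2 - m, 0, 0, 0)` and `β = 2` both
conditions say `m > 1`.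
-/

open Set Metric

section ENNRealPowers

lemma ennreal_rpow_neg_add (x : ℝ≥0∞) {p q : ℝ} (hp : 0 ≤ p) (hq : 0 ≤ q) :
    x ^ (-(p + q)) = x ^ (-p) * x ^ (-q) := by
  rw [ENNReal.rpow_neg, ENNReal.rpow_add_of_nonneg _ _ hp hq, ENNReal.rpow_neg, ENNReal.rpow_neg]
  rcases eq_or_ne x 0 with rfl | hx
  · exact ENNReal.mul_inv (.inr (by simp [hq.not_gt])) (.inl (by simp [hp.not_gt]))
  · exact ENNReal.mul_inv (.inl (by simp [hx, hp.not_gt])) (.inr (by simp [hx, hq.not_gt]))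

lemma ennreal_rpow_neg_sum {ι : Type*} (s : Finset ι) (x : ℝ≥0∞) {b : ι → ℝ}
    (hb : ∀ j ∈ s, 0 ≤ b j) : x ^ (-∑ j ∈ s, b j) = ∏ j ∈ s, x ^ (-b j) := by
  induction s using Finset.cons_induction with
  | empty => simp
  | cons j s hj ih =>
    rw [Finset.forall_mem_cons] at hb
    rw [Finset.sum_cons, Finset.prod_cons,
      ennreal_rpow_neg_add x hb.1 (Finset.sum_nonneg hb.2), ih hb.2]

lemma ennreal_rpow_neg_anti {x y : ℝ≥0∞} {q : ℝ} (hxy : x ≤ y) (hq : 0 ≤ q) :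
    y ^ (-q) ≤ x ^ (-q) := by
  rw [ENNReal.rpow_neg, ENNReal.rpow_neg]
  exact ENNReal.inv_le_inv.mpr (ENNReal.rpow_le_rpow hxy hq)

lemma ennreal_rpow_neg_mul_rpow_neg_le_add (x y : ℝ≥0∞) {p q : ℝ} (hp : 0 ≤ p) (hq : 0 ≤ q) :
    x ^ (-p) * y ^ (-q) ≤ x ^ (-(p + q)) + y ^ (-(p + q)) := by
  rw [ennreal_rpow_neg_add x hp hq, ennreal_rpow_neg_add y hp hq]
  rcases le_total x y with h | h
  · exact (mul_le_mul_right (ennreal_rpow_neg_anti h hq) _).trans le_self_add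
  · exact (mul_le_mul_left (ennreal_rpow_neg_anti h hp) _).trans le_add_self

end ENNRealPowers

section RealPowers

variable {p s t : ℝ}

lemma rpow_sub_rpow_le_mul_sub (hp : 1 ≤ p) (ht : 0 ≤ t) (hts : t ≤ s) (hs : s ≤ 1) :
    s ^ p - t ^ p ≤ p * (s - t) := by
  rcases hts.eq_or_lt with rfl | hlt
  · simp
  have hslope := (convexOn_rpow hp).slope_le_of_hasDerivAt ht (ht.trans hts) hlt
    (Real.hasDerivAt_rpow_const (.inr hp))
  rw [slope_def_field, div_le_iff₀ (sub_pos.mpr hlt)] at hslope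
  refine hslope.trans (mul_le_mul_of_nonneg_right ?_ (sub_pos.mpr hlt).le)
  exact mul_le_of_le_one_right (by linarith)
    (Real.rpow_le_one (ht.trans hts) hs (by linarith))

lemma rpow_mul_sub_le_rpow_sub_rpow (hp : 1 ≤ p) (ht : 0 ≤ t) (hts : t ≤ s) (hs : s ≤ 1) :
    s ^ p * (s - t) ≤ s ^ p - t ^ p := by
  have hs0 := ht.trans hts
  have hsplit {x : ℝ} (hx : 0 ≤ x) : x ^ p = x ^ (p - 1) * x := by
    rw [← Real.rpow_add_one' hx (by linarith), sub_add_cancel]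
  calc s ^ p * (s - t) ≤ s ^ (p - 1) * (s - t) := by
        refine mul_le_mul_of_nonneg_right ?_ (sub_nonneg.mpr hts)
        exact Real.rpow_le_rpow_of_exponent_ge' hs0 hs (by linarith) (by linarith)
    _ = s ^ p - s ^ (p - 1) * t := by rw [hsplit hs0]; ring
    _ ≤ s ^ p - t ^ p := by
        rw [hsplit ht]
        gcongr

lemma abs_abs_rpow_sub_abs_rpow_le (hp : 1 ≤ p) (hs : |s| ≤ 1) (ht : |t| ≤ 1) :
    |(|s| ^ p - |t| ^ p)| ≤ p * |s - t| := by
  wlog hts : |t| ≤ |s| generalizing s t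
  · rw [abs_sub_comm, abs_sub_comm s]
    exact this ht hs (le_of_not_ge hts)
  rw [abs_of_nonneg (sub_nonneg.mpr (Real.rpow_le_rpow (abs_nonneg t) hts (by linarith)))]
  refine (rpow_sub_rpow_le_mul_sub hp (abs_nonneg t) hts hs).trans ?_
  gcongr
  exact abs_sub_abs_le_abs_sub s t

lemma abs_sub_le_abs_abs_sub_abs_of_sign_eq (hsign : SignType.sign s = SignType.sign t) :
    |s - t| ≤ |(|s| - |t|)| := by
  have hfactor : s - t = SignType.sign t * (|s| - |t|) := by
    rw [mul_sub, sign_mul_abs, ← hsign, sign_mul_abs]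
  rw [hfactor, abs_mul]
  refine mul_le_of_le_one_left (abs_nonneg _) ?_
  cases SignType.sign t <;> simp

lemma mul_abs_sub_le_abs_abs_rpow_sub_abs_rpow {c : ℝ} (hp : 1 ≤ p) (hs : |s| ≤ 1) (ht : |t| ≤ 1)
    (hsign : SignType.sign s = SignType.sign t) (hcs : c ≤ |s| ^ p) (hct : c ≤ |t| ^ p) :
    c * |s - t| ≤ |(|s| ^ p - |t| ^ p)| := by
  wlog hts : |t| ≤ |s| generalizing s t
  · rw [abs_sub_comm, abs_sub_comm (|s| ^ p)]
    exact this ht hs hsign.symm hct hcs (le_of_not_ge hts)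
  calc c * |s - t| ≤ |s| ^ p * |(|s| - |t|)| :=
        mul_le_mul hcs (abs_sub_le_abs_abs_sub_abs_of_sign_eq hsign) (abs_nonneg _) (by positivity)
    _ = |s| ^ p * (|s| - |t|) := by rw [abs_of_nonneg (sub_nonneg.mpr hts)]
    _ ≤ |s| ^ p - |t| ^ p := rpow_mul_sub_le_rpow_sub_rpow hp (abs_nonneg t) hts hs
    _ ≤ _ := le_abs_self _

end RealPowers

section AntilipschitzChange

variable {X Y : Type*} [MetricSpace X] [MeasurableSpace X] [BorelSpace X]
  [MetricSpace Y] [MeasurableSpace Y] [BorelSpace Y]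
  {f : X → Y} {s : Set X} {t : Set Y} {K : NNReal} {d : ℝ}

lemma hausdorffMeasure_le_mul_image_of_antilipschitz_domRestrict
    (hf : AntilipschitzWith K (s.domRestrict f)) (hd : 0 ≤ d) {a : Set X} (ha : a ⊆ s) :
    μH[d] a ≤ (K : ℝ≥0∞) ^ d * μH[d] (f '' a) := by
  have himage : ((↑) : s → X) '' ((↑) ⁻¹' a) = a := by
    rw [Subtype.image_preimage_coe, inter_eq_right.mpr ha]
  calc μH[d] a = μH[d] (((↑) : s → X) ⁻¹' a) := by
        rw [← (isometry_subtype_coe (s := s)).hausdorffMeasure_image (.inl hd), himage]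
    _ ≤ _ := hf.le_hausdorffMeasure_image hd _
    _ = _ := by rw [← himage, image_image, himage]; rfl

lemma setLIntegral_comp_hausdorffMeasure_le
    (hf : AntilipschitzWith K (s.domRestrict f)) (hfm : Measurable f) (hst : MapsTo f s t)
    (hd : 0 ≤ d) {g : Y → ℝ≥0∞} (hg : Measurable g) :
    ∫⁻ x in s, g (f x) ∂μH[d] ≤ (K : ℝ≥0∞) ^ d * ∫⁻ y in t, g y ∂μH[d] := by
  rw [← lintegral_map hg hfm, ← smul_eq_mul, ← lintegral_smul_measure]
  refine lintegral_mono' (Measure.le_iff.mpr fun b hb ↦ ?_) le_rfl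
  rw [Measure.map_apply hfm hb, Measure.restrict_apply (hfm hb), Measure.smul_apply,
    Measure.restrict_apply hb, smul_eq_mul]
  have hsub : f '' (f ⁻¹' b ∩ s) ⊆ b ∩ t := by
    rintro _ ⟨x, ⟨hxb, hxs⟩, rfl⟩
    exact ⟨hxb, hst hxs⟩
  exact (hausdorffMeasure_le_mul_image_of_antilipschitz_domRestrict hf hd inter_subset_right).trans
    (mul_le_mul_right (measure_mono hsub) _)

end AntilipschitzChange

section RieszKernel

section NormPowers

variable {E : Type*} [NormedAddCommGroup E] [MeasurableSpace E] [BorelSpace E]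
  (μ : Measure E) {q : ℝ}

lemma setLIntegral_closedBall_enorm_rpow_neg_ne_top [NormedSpace ℝ E] [FiniteDimensional ℝ E]
    [Nontrivial E] [μ.IsAddHaarMeasure] (hq : q < Module.finrank ℝ E) (R : ℝ) :
    ∫⁻ x in closedBall 0 R, ‖x‖ₑ ^ (-q) ∂μ ≠ ⊤ := by
  have hint : IntegrableOn (fun x : E ↦ ‖x‖ ^ (-q)) (closedBall 0 R) μ :=
    (locallyIntegrable_of_norm_le_rpow (C := 1) Module.finrank_pos hq
      (.of_forall fun x ↦ by simp [abs_of_nonneg (Real.rpow_nonneg (norm_nonneg x) _)])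
      (measurable_norm.pow_const _).aestronglyMeasurable).integrableOn_isCompact
      (isCompact_closedBall 0 R)
  rw [← lintegral_congr_ae (ae_restrict_of_ae ?_)]
  · exact hint.lintegral_lt_top.ne
  filter_upwards [compl_mem_ae_iff.mpr (measure_singleton (μ := μ) 0)] with x hx
  rw [← ENNReal.ofReal_rpow_of_pos (norm_pos_iff.mpr hx), ofReal_norm]

lemma setLIntegral_closedBall_enorm_sub_rpow_neg_le [μ.IsAddRightInvariant] (R : ℝ) {y : E}
    (hy : y ∈ closedBall 0 R) :
    ∫⁻ x in closedBall 0 R, ‖x - y‖ₑ ^ (-q) ∂μ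
      ≤ ∫⁻ x in closedBall 0 (2 * R), ‖x‖ₑ ^ (-q) ∂μ := by
  rw [← (measurePreserving_sub_right μ y).setLIntegral_comp_preimage
    (s := closedBall 0 (2 * R)) (f := fun x ↦ ‖x‖ₑ ^ (-q)) measurableSet_closedBall (by fun_prop)]
  refine lintegral_mono_set fun x hx ↦ ?_
  rw [mem_closedBall_zero_iff] at hx hy
  rw [mem_preimage, mem_closedBall_zero_iff]
  linarith [norm_sub_le x y]

end NormPowers

lemma lintegral_fin_prod_eq_prod {n : ℕ} {E : Fin n → Type*} {mE : ∀ i, MeasurableSpace (E i)}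
    {μ : (i : Fin n) → Measure (E i)} [∀ i, SigmaFinite (μ i)] {f : (i : Fin n) → E i → ℝ≥0∞}
    (hf : ∀ i, Measurable (f i)) :
    ∫⁻ x, ∏ i, f i (x i) ∂Measure.pi μ = ∏ i, ∫⁻ x, f i x ∂μ i := by
  induction n with
  | zero => simp
  | succ n ih =>
    rw [Fin.prod_univ_succ, ← ih fun i ↦ hf i.succ,
      ← lintegral_prod_mul (hf 0).aemeasurable (Finset.measurable_prod _ fun i _ ↦
        (hf i.succ).comp (measurable_pi_apply i)).aemeasurable]
    simp_rw [Fin.prod_univ_succ]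
    exact (measurePreserving_piFinSuccAbove μ 0).lintegral_comp
      (f := fun x ↦ f 0 x.1 * ∏ i : Fin n, f i.succ (x.2 i)) (by fun_prop)

/-- The Riesz kernel of order `β`, with additional singularities of orders `α j` along the
coordinate hyperplanes `x j = 0`. The norm is the sup norm, and the kernel is `⊤` where it is
singular unless another factor vanishes. -/
def weightedRieszKernel {ι : Type*} [Fintype ι] (α : ι → ℝ) (β : ℝ) (x y : ι → ℝ) : ℝ≥0∞ :=
  (∏ j, ‖x j‖ₑ ^ (-α j)) * ‖x - y‖ₑ ^ (-β)

section Kernel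

variable {ι : Type*} [Fintype ι] {α : ι → ℝ} {β : ℝ}

lemma measurable_weightedRieszKernel_left (α : ι → ℝ) (β : ℝ) (y : ι → ℝ) :
    Measurable fun x ↦ weightedRieszKernel α β x y := by
  unfold weightedRieszKernel
  fun_prop

lemma enorm_apply_le_enorm (x : ι → ℝ) (j : ι) : ‖x j‖ₑ ≤ ‖x‖ₑ :=
  enorm_le_iff_norm_le.mpr (norm_le_pi_norm x j)

lemma weightedRieszKernel_le_prod {b : ι → ℝ} (hα : ∀ j, 0 ≤ α j) (hb : ∀ j, 0 ≤ b j)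
    (hβ : ∑ j, b j = β) (x y : ι → ℝ) :
    weightedRieszKernel α β x y
      ≤ ∏ j, (‖x j‖ₑ ^ (-(α j + b j)) + ‖x j - y j‖ₑ ^ (-(α j + b j))) := by
  rw [weightedRieszKernel, ← hβ, ennreal_rpow_neg_sum _ _ fun j _ ↦ hb j,
    ← Finset.prod_mul_distrib]
  refine Finset.prod_le_prod' fun j _ ↦ ?_
  exact (mul_le_mul_right (ennreal_rpow_neg_anti (enorm_apply_le_enorm (x - y) j) (hb j)) _).trans
    (ennreal_rpow_neg_mul_rpow_neg_le_add _ _ (hα j) (hb j))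

/-- Distributing `β` proportionally to `1 - α j` keeps the total order in every coordinate below
one. -/
lemma exists_sum_eq_and_forall_add_lt_one (hα : ∀ j, α j < 1) (hβ : 0 ≤ β)
    (hαβ : ∑ j, α j + β < Fintype.card ι) :
    ∃ b : ι → ℝ, (∀ j, 0 ≤ b j) ∧ ∑ j, b j = β ∧ ∀ j, α j + b j < 1 := by
  have hpos : 0 < Fintype.card ι - ∑ j, α j := by linarith
  set γ := β / (Fintype.card ι - ∑ j, α j) with hγ
  have hγ0 : 0 ≤ γ := div_nonneg hβ hpos.le
  have hγ1 : γ < 1 := (div_lt_one hpos).mpr (by linarith)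
  refine ⟨fun j ↦ γ * (1 - α j), fun j ↦ mul_nonneg hγ0 (sub_nonneg.mpr (hα j).le), ?_, fun j ↦ ?_⟩
  · rw [← Finset.mul_sum, Finset.sum_sub_distrib]
    simp [hγ, div_mul_cancel₀ _ hpos.ne']
  · nlinarith [hα j]

end Kernel

lemma exists_forall_setLIntegral_closedBall_weightedRieszKernel_le {n : ℕ} {α : Fin n → ℝ} {β : ℝ}
    (hα0 : ∀ j, 0 ≤ α j) (hα1 : ∀ j, α j < 1) (hβ : 0 ≤ β) (hαβ : ∑ j, α j + β < n)
    {R : ℝ} (hR : 0 ≤ R) :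
    ∃ C ≠ ⊤, ∀ y ∈ closedBall 0 R,
      ∫⁻ x in closedBall 0 R, weightedRieszKernel α β x y ≤ C := by
  obtain ⟨b, hb0, hbβ, hb1⟩ := exists_sum_eq_and_forall_add_lt_one hα1 hβ (by simpa using hαβ)
  let I (q : ℝ) : ℝ≥0∞ := ∫⁻ t in closedBall (0 : ℝ) (2 * R), ‖t‖ₑ ^ (-q)
  have hI (j) : I (α j + b j) ≠ ⊤ :=
    setLIntegral_closedBall_enorm_rpow_neg_ne_top volume (by simpa using hb1 j) _
  refine ⟨∏ j, (I (α j + b j) + I (α j + b j)),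
    ENNReal.prod_ne_top fun j _ ↦ ENNReal.add_ne_top.mpr ⟨hI j, hI j⟩, fun y hy ↦ ?_⟩
  have hy' (j) : y j ∈ closedBall (0 : ℝ) R := by
    rw [mem_closedBall_zero_iff] at hy ⊢
    exact (norm_le_pi_norm y j).trans hy
  calc ∫⁻ x in closedBall 0 R, weightedRieszKernel α β x y
      ≤ ∫⁻ x in closedBall 0 R,
          ∏ j, (‖x j‖ₑ ^ (-(α j + b j)) + ‖x j - y j‖ₑ ^ (-(α j + b j))) :=
        lintegral_mono fun x ↦ weightedRieszKernel_le_prod hα0 hb0 hbβ x y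
    _ = ∏ j, ∫⁻ t in closedBall (0 : ℝ) R,
          (‖t‖ₑ ^ (-(α j + b j)) + ‖t - y j‖ₑ ^ (-(α j + b j))) := by
        rw [closedBall_pi _ hR, volume_pi, Measure.restrict_pi_pi]
        exact lintegral_fin_prod_eq_prod
          (f := fun j t ↦ ‖t‖ₑ ^ (-(α j + b j)) + ‖t - y j‖ₑ ^ (-(α j + b j)))
          fun j ↦ by fun_prop
    _ ≤ ∏ j, (I (α j + b j) + I (α j + b j)) := by
        refine Finset.prod_le_prod' fun j _ ↦ ?_
        rw [lintegral_add_left (by fun_prop)]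
        gcongr
        · exact lintegral_mono_set (closedBall_subset_closedBall (by linarith))
        · exact setLIntegral_closedBall_enorm_sub_rpow_neg_le volume R (hy' j)

end RieszKernel

/-- The superellipsoid `∑ |x j| ^ p j = 1` with exponents `p`, as a subset of `ι → ℝ` with the sup
metric. -/
def superellipsoid {ι : Type*} [Fintype ι] (p : ι → ℝ) : Set (ι → ℝ) :=
  {x | ∑ j, |x j| ^ p j = 1}

/-- The part of the superellipsoid where the `i`-th coordinate has sign `σ` and carries at least
the average share of the sum `∑ |x j| ^ p j`. It is a Lipschitz graph over the other coordinates.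
The patch of sign `0` is empty for nonzero exponents, which saves a case distinction. -/
def superellipsoidPatch {ι : Type*} [Fintype ι] (p : ι → ℝ) (i : ι) (σ : SignType) :
    Set (ι → ℝ) :=
  {x ∈ superellipsoid p | (Fintype.card ι : ℝ)⁻¹ ≤ |x i| ^ p i ∧ SignType.sign (x i) = σ}

section Superellipsoid

section Patches

variable {ι : Type*} [Fintype ι] {p : ι → ℝ}

lemma superellipsoid_subset_closedBall (hp : ∀ j, 0 < p j) :
    superellipsoid p ⊆ closedBall 0 1 := by
  intro x hx
  rw [mem_closedBall_zero_iff, pi_norm_le_iff_of_nonneg zero_le_one]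
  intro j
  have hle : |x j| ^ p j ≤ 1 := hx ▸ Finset.single_le_sum (f := fun j ↦ |x j| ^ p j)
    (fun _ _ ↦ Real.rpow_nonneg (abs_nonneg _) _) (Finset.mem_univ j)
  by_contra! hlt
  exact hle.not_gt (Real.one_lt_rpow hlt (hp j))

lemma abs_apply_le_one_of_mem_superellipsoid (hp : ∀ j, 0 < p j) {x : ι → ℝ}
    (hx : x ∈ superellipsoid p) (j : ι) : |x j| ≤ 1 :=
  (norm_le_pi_norm x j).trans (mem_closedBall_zero_iff.mp (superellipsoid_subset_closedBall hp hx))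

lemma superellipsoid_subset_iUnion_patch [Nonempty ι] (p : ι → ℝ) :
    superellipsoid p ⊆ ⋃ k : ι × SignType, superellipsoidPatch p k.1 k.2 := by
  intro x hx
  obtain ⟨i, -, hi⟩ : ∃ i ∈ Finset.univ, (Fintype.card ι : ℝ)⁻¹ ≤ |x i| ^ p i := by
    refine Finset.exists_le_of_sum_le Finset.univ_nonempty (Eq.le ?_)
    rw [show ∑ j, |x j| ^ p j = 1 from hx]
    simp
  exact mem_iUnion.mpr ⟨(i, SignType.sign (x i)), hx, hi, rfl⟩

end Patches

variable {n : ℕ} {p : Fin (n + 1) → ℝ}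

lemma abs_abs_rpow_sub_abs_rpow_le_of_mem_superellipsoid (hp : ∀ j, 1 ≤ p j)
    {x y : Fin (n + 1) → ℝ} (hx : x ∈ superellipsoid p) (hy : y ∈ superellipsoid p)
    (i : Fin (n + 1)) :
    |(|x i| ^ p i - |y i| ^ p i)| ≤ (∑ j, p j) * dist (i.removeNth x) (i.removeNth y) := by
  have hp0 (j) : 0 < p j := zero_lt_one.trans_le (hp j)
  have hbalance : |x i| ^ p i - |y i| ^ p i
      = ∑ j, (|y (i.succAbove j)| ^ p (i.succAbove j)
          - |x (i.succAbove j)| ^ p (i.succAbove j)) := by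
    rw [superellipsoid, mem_ofPred_eq, Fin.sum_univ_succAbove _ i] at hx hy
    rw [Finset.sum_sub_distrib]
    linarith
  calc |(|x i| ^ p i - |y i| ^ p i)|
      ≤ ∑ j, p (i.succAbove j) * dist (i.removeNth x) (i.removeNth y) := by
        rw [hbalance]
        refine (Finset.abs_sum_le_sum_abs _ _).trans (Finset.sum_le_sum fun j _ ↦ ?_)
        refine (abs_abs_rpow_sub_abs_rpow_le (hp _)
          (abs_apply_le_one_of_mem_superellipsoid hp0 hy _)
          (abs_apply_le_one_of_mem_superellipsoid hp0 hx _)).trans ?_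
        rw [abs_sub_comm, ← Real.dist_eq]
        exact mul_le_mul_of_nonneg_left (dist_le_pi_dist (i.removeNth x) (i.removeNth y) j)
          (hp0 _).le
    _ ≤ _ := by
        rw [← Finset.sum_mul, Fin.sum_univ_succAbove p i]
        gcongr
        linarith [hp0 i]

lemma antilipschitzWith_removeNth_superellipsoidPatch (hp : ∀ j, 1 ≤ p j) (i : Fin (n + 1))
    (σ : SignType) :
    AntilipschitzWith (Real.toNNReal (Fintype.card (Fin (n + 1)) * ∑ j, p j))
      ((superellipsoidPatch p i σ).domRestrict i.removeNth) := by
  have hp0 (j) : 0 < p j := zero_lt_one.trans_le (hp j)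
  set c : ℝ := ((Fintype.card (Fin (n + 1)) : ℕ) : ℝ) with hc
  have hc1 : 1 ≤ c := by simp [hc]
  have hK : 1 ≤ c * ∑ j, p j := one_le_mul_of_one_le_of_one_le hc1
    ((hp i).trans (Finset.single_le_sum (fun j _ ↦ (hp0 j).le) (Finset.mem_univ i)))
  refine AntilipschitzWith.of_le_mul_dist fun ⟨x, hx, hxc, hxσ⟩ ⟨y, hy, hyc, hyσ⟩ ↦ ?_
  rw [Real.coe_toNNReal _ (zero_le_one.trans hK), Subtype.dist_eq, domRestrict_apply,
    domRestrict_apply, dist_pi_le_iff (by positivity), i.forall_iff_succAbove]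
  refine ⟨?_, fun j ↦ (dist_le_pi_dist (i.removeNth x) (i.removeNth y) j).trans
    (le_mul_of_one_le_left dist_nonneg hK)⟩
  have hgraph : c⁻¹ * |x i - y i| ≤ (∑ j, p j) * dist (i.removeNth x) (i.removeNth y) :=
    (mul_abs_sub_le_abs_abs_rpow_sub_abs_rpow (hp i)
      (abs_apply_le_one_of_mem_superellipsoid hp0 hx i)
      (abs_apply_le_one_of_mem_superellipsoid hp0 hy i) (hxσ.trans hyσ.symm) hxc hyc).trans
      (abs_abs_rpow_sub_abs_rpow_le_of_mem_superellipsoid hp hx hy i)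
  rwa [inv_mul_le_iff₀ (by positivity), ← mul_assoc] at hgraph

variable {α : Fin (n + 1) → ℝ} {β : ℝ}

lemma weightedRieszKernel_le_removeNth_of_mem_patch (hp : ∀ j, 0 < p j) (hβ : 0 ≤ β)
    {i : Fin (n + 1)} (hα : α i ≤ p i) {σ : SignType} {x : Fin (n + 1) → ℝ}
    (hx : x ∈ superellipsoidPatch p i σ) (z : Fin (n + 1) → ℝ) :
    weightedRieszKernel α β x z ≤ Fintype.card (Fin (n + 1)) *
      weightedRieszKernel (i.removeNth α) β (i.removeNth x) (i.removeNth z) := by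
  obtain ⟨hxS, hxc, -⟩ := hx
  have hx1 : ‖x i‖ₑ ≤ 1 := by
    rw [← enorm_one (G := ℝ)]
    exact enorm_le_iff_norm_le.mpr
      (by simpa using abs_apply_le_one_of_mem_superellipsoid hp hxS i)
  have hweight : ‖x i‖ₑ ^ (-α i) ≤ Fintype.card (Fin (n + 1)) := by
    refine (ENNReal.rpow_le_rpow_of_exponent_ge hx1 (neg_le_neg hα)).trans ?_
    rw [ENNReal.rpow_neg, ← ofReal_norm, Real.norm_eq_abs,
      ENNReal.ofReal_rpow_of_nonneg (abs_nonneg _) (hp i).le, ENNReal.inv_le_iff_inv_le]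
    have hofReal := ENNReal.ofReal_le_ofReal hxc
    rwa [ENNReal.ofReal_inv_of_pos (by positivity), ENNReal.ofReal_natCast] at hofReal
  have hnorm : ‖i.removeNth x - i.removeNth z‖ₑ ≤ ‖x - z‖ₑ :=
    enorm_le_iff_norm_le.mpr ((pi_norm_le_iff_of_nonneg (norm_nonneg _)).mpr
      fun j ↦ norm_le_pi_norm (x - z) (i.succAbove j))
  rw [weightedRieszKernel, Fin.prod_univ_succAbove _ i, mul_assoc]
  exact mul_le_mul' hweight (mul_le_mul' le_rfl (ennreal_rpow_neg_anti hnorm hβ))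

lemma exists_forall_setLIntegral_superellipsoidPatch_le (hp : ∀ j, 1 ≤ p j)
    (hα0 : ∀ j, 0 ≤ α j) (hα1 : ∀ j, α j < 1) (hβ : 0 ≤ β) (hαβ : ∑ j, α j + β < n)
    (i : Fin (n + 1)) (σ : SignType) :
    ∃ C ≠ ⊤, ∀ z ∈ superellipsoid p,
      ∫⁻ x in superellipsoidPatch p i σ, weightedRieszKernel α β x z ∂μH[n] ≤ C := by
  have hp0 (j) : 0 < p j := zero_lt_one.trans_le (hp j)
  have hαβ' : ∑ j, i.removeNth α j + β < n := by
    rw [Fin.sum_univ_succAbove _ i] at hαβ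
    simp only [Fin.removeNth_apply]
    linarith [hα0 i]
  obtain ⟨C, hC, hCle⟩ := exists_forall_setLIntegral_closedBall_weightedRieszKernel_le
    (fun j ↦ hα0 _) (fun j ↦ hα1 _) hβ hαβ' zero_le_one
  have hmaps : MapsTo i.removeNth (superellipsoid p) (closedBall 0 1) := fun x hx ↦ by
    rw [mem_closedBall_zero_iff, pi_norm_le_iff_of_nonneg zero_le_one]
    exact fun j ↦ abs_apply_le_one_of_mem_superellipsoid hp0 hx _
  have hvol : (μH[n] : Measure (Fin n → ℝ)) = volume := by
    simpa using hausdorffMeasure_pi_real (ι := Fin n)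
  have hremove : Measurable (i.removeNth : (Fin (n + 1) → ℝ) → Fin n → ℝ) :=
    measurable_pi_lambda _ fun j ↦ measurable_pi_apply _
  set K := Real.toNNReal (Fintype.card (Fin (n + 1)) * ∑ j, p j)
  refine ⟨(K : ℝ≥0∞) ^ (n : ℝ) * (Fintype.card (Fin (n + 1)) * C),
    by finiteness, fun z hz ↦ ?_⟩
  have hkernel := measurable_weightedRieszKernel_left (i.removeNth α) β (i.removeNth z)
  calc ∫⁻ x in superellipsoidPatch p i σ, weightedRieszKernel α β x z ∂μH[n]
      ≤ ∫⁻ x in superellipsoidPatch p i σ, Fintype.card (Fin (n + 1)) *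
          weightedRieszKernel (i.removeNth α) β (i.removeNth x) (i.removeNth z) ∂μH[n] :=
        setLIntegral_mono ((hkernel.comp hremove).const_mul _) fun x hx ↦
          weightedRieszKernel_le_removeNth_of_mem_patch hp0 hβ ((hα1 i).le.trans (hp i)) hx z
    _ ≤ (K : ℝ≥0∞) ^ (n : ℝ) * ∫⁻ x in closedBall 0 1, Fintype.card (Fin (n + 1)) *
          weightedRieszKernel (i.removeNth α) β x (i.removeNth z) ∂μH[n] :=
        setLIntegral_comp_hausdorffMeasure_le
          (antilipschitzWith_removeNth_superellipsoidPatch hp i σ) hremove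
          (hmaps.mono_left (sep_subset _ _)) n.cast_nonneg (hkernel.const_mul _)
    _ ≤ _ := by
        rw [hvol, lintegral_const_mul _ hkernel]
        gcongr
        exact hCle _ (hmaps hz)

theorem exists_forall_setLIntegral_superellipsoid_le (hp : ∀ j, 1 ≤ p j)
    (hα0 : ∀ j, 0 ≤ α j) (hα1 : ∀ j, α j < 1) (hβ : 0 ≤ β) (hαβ : ∑ j, α j + β < n) :
    ∃ C ≠ ⊤, ∀ z ∈ superellipsoid p,
      ∫⁻ x in superellipsoid p, weightedRieszKernel α β x z ∂μH[n] ≤ C := by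
  choose C hC hCle using fun k : Fin (n + 1) × SignType ↦
    exists_forall_setLIntegral_superellipsoidPatch_le hp hα0 hα1 hβ hαβ k.1 k.2
  refine ⟨∑ k, C k, ENNReal.sum_ne_top.mpr fun k _ ↦ hC k, fun z hz ↦ ?_⟩
  calc ∫⁻ x in superellipsoid p, weightedRieszKernel α β x z ∂μH[n]
      ≤ ∫⁻ x in ⋃ k : Fin (n + 1) × SignType, superellipsoidPatch p k.1 k.2,
          weightedRieszKernel α β x z ∂μH[n] :=
        lintegral_mono_set (superellipsoid_subset_iUnion_patch p)
    _ ≤ ∑ k : Fin (n + 1) × SignType, ∫⁻ x in superellipsoidPatch p k.1 k.2,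
          weightedRieszKernel α β x z ∂μH[n] :=
        (lintegral_iUnion_le _ _).trans_eq (tsum_fintype _)
    _ ≤ ∑ k, C k := Finset.sum_le_sum fun k _ ↦ hCle k z hz

end Superellipsoid

section Boundary

/-- The real coordinates `(u₁, v₁, u₂, v₂)` on `ℂ²`, valued in `ℝ⁴` with the sup norm. -/
def realCoords : C2 →+ (Fin 4 → ℝ) where
  toFun w := ![(w 0).re, (w 0).im, (w 1).re, (w 1).im]
  map_zero' := by ext j; fin_cases j <;> simp
  map_add' w z := by ext j; fin_cases j <;> simp

lemma norm_sq_eq_sum_realCoords_sq (w : C2) : ‖w‖ ^ 2 = ∑ j, realCoords w j ^ 2 := by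
  simp only [EuclideanSpace.norm_sq_eq, Complex.sq_norm, Complex.normSq_apply, Fin.sum_univ_two,
    Fin.sum_univ_four, realCoords, AddMonoidHom.coe_mk, ZeroHom.coe_mk, Matrix.cons_val]
  ring

lemma norm_realCoords_le (w : C2) : ‖realCoords w‖ ≤ ‖w‖ := by
  refine (pi_norm_le_iff_of_nonneg (norm_nonneg w)).mpr fun j ↦ ?_
  refine abs_le_of_sq_le_sq ?_ (norm_nonneg w)
  rw [norm_sq_eq_sum_realCoords_sq]
  exact Finset.single_le_sum (f := fun j ↦ realCoords w j ^ 2) (fun _ _ ↦ sq_nonneg _)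
    (Finset.mem_univ j)

lemma norm_le_two_mul_norm_realCoords (w : C2) : ‖w‖ ≤ 2 * ‖realCoords w‖ := by
  refine le_of_sq_le_sq ?_ (by positivity)
  calc ‖w‖ ^ 2 = ∑ j, ‖realCoords w j‖ ^ 2 := by
        simp only [norm_sq_eq_sum_realCoords_sq, Real.norm_eq_abs, sq_abs]
    _ ≤ ∑ _j : Fin 4, ‖realCoords w‖ ^ 2 := by
        gcongr with j
        exact norm_le_pi_norm _ j
    _ = (2 * ‖realCoords w‖) ^ 2 := by
        simp only [Finset.sum_const, Finset.card_univ, Fintype.card_fin, nsmul_eq_mul]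
        ring

lemma antilipschitzWith_realCoords : AntilipschitzWith 2 realCoords :=
  AddMonoidHomClass.antilipschitz_of_bound realCoords norm_le_two_mul_norm_realCoords

lemma continuous_realCoords : Continuous realCoords :=
  (AddMonoidHomClass.lipschitz_of_bound realCoords 1
    fun w ↦ (norm_realCoords_le w).trans_eq (one_mul _).symm).continuous

lemma realCoords_mem_superellipsoid_iff {m : ℝ} {w : C2} :
    realCoords w ∈ superellipsoid ![m, 2, 2, 2] ↔ w ∈ bDm m := by
  simp only [superellipsoid, bDm, rhom, mem_ofPred_eq, Fin.sum_univ_four, realCoords,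
    AddMonoidHom.coe_mk, ZeroHom.coe_mk, Matrix.cons_val, Real.rpow_two, sq_abs, Complex.sq_norm,
    Complex.normSq_apply]
  constructor <;> intro h <;> linarith

lemma rpow_mul_rpow_le_weightedRieszKernel_realCoords {m β : ℝ} (hm : 0 < m) (hβ : 0 ≤ β)
    {w : C2} (hw : w ∈ bDm m) (z : C2) :
    ENNReal.ofReal |(w 0).re| ^ (m - 2) * ENNReal.ofReal ‖w - z‖ ^ (-β)
      ≤ weightedRieszKernel ![max (2 - m) 0, 0, 0, 0] β (realCoords w) (realCoords z) := by
  have hre : |(w 0).re| ≤ 1 :=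
    abs_apply_le_one_of_mem_superellipsoid (fun j ↦ by fin_cases j <;> simp [hm])
      (realCoords_mem_superellipsoid_iff.mpr hw) 0
  have hweight : ∏ j, ‖realCoords w j‖ₑ ^ (-(![max (2 - m) 0, 0, 0, 0] : Fin 4 → ℝ) j)
      = ENNReal.ofReal |(w 0).re| ^ (-max (2 - m) 0) := by
    simp [Fin.prod_univ_four, realCoords, ← ofReal_norm]
  rw [weightedRieszKernel, hweight, ← map_sub, ofReal_norm]
  refine mul_le_mul' ?_
    (ennreal_rpow_neg_anti (enorm_le_iff_norm_le.mpr (norm_realCoords_le _)) hβ)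
  exact ENNReal.rpow_le_rpow_of_exponent_ge (ENNReal.ofReal_le_one.mpr hre)
    (by linarith [le_max_left (2 - m) 0])

lemma exists_forall_setLIntegral_bDm_le {m β : ℝ} (hm : 1 < m) (hβ : 0 ≤ β)
    (hmβ : max (2 - m) 0 + β < 3) :
    ∃ C ≠ ⊤, ∀ z ∈ bDm m,
      ∫⁻ w in bDm m,
        ENNReal.ofReal |(w 0).re| ^ (m - 2) * ENNReal.ofReal ‖w - z‖ ^ (-β) ∂μH[3] ≤ C := by
  have hmax : max (2 - m) 0 < 1 := max_lt (by linarith) one_pos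
  obtain ⟨C, hC, hCle⟩ := exists_forall_setLIntegral_superellipsoid_le (n := 3)
    (p := ![m, 2, 2, 2]) (α := ![max (2 - m) 0, 0, 0, 0]) (β := β)
    (by simp [Fin.forall_fin_succ, hm.le]) (by simp [Fin.forall_fin_succ])
    (by simpa [Fin.forall_fin_succ] using hmax) hβ
    (by simpa [Fin.sum_univ_succ] using hmβ)
  refine ⟨(2 : NNReal) ^ (3 : ℝ) * C, by finiteness, fun z hz ↦ ?_⟩
  have hkernel := measurable_weightedRieszKernel_left ![max (2 - m) 0, 0, 0, 0] β (realCoords z)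
  calc ∫⁻ w in bDm m,
        ENNReal.ofReal |(w 0).re| ^ (m - 2) * ENNReal.ofReal ‖w - z‖ ^ (-β) ∂μH[3]
      ≤ ∫⁻ w in bDm m, weightedRieszKernel ![max (2 - m) 0, 0, 0, 0] β (realCoords w)
          (realCoords z) ∂μH[3] :=
        setLIntegral_mono (hkernel.comp continuous_realCoords.measurable) fun w hw ↦
          rpow_mul_rpow_le_weightedRieszKernel_realCoords (by linarith) hβ hw z
    _ ≤ (2 : NNReal) ^ (3 : ℝ) * ∫⁻ x in superellipsoid ![m, 2, 2, 2],
          weightedRieszKernel ![max (2 - m) 0, 0, 0, 0] β x (realCoords z) ∂μH[3] :=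
        setLIntegral_comp_hausdorffMeasure_le (antilipschitzWith_realCoords.domRestrict _)
          continuous_realCoords.measurable (fun w ↦ realCoords_mem_superellipsoid_iff.mpr)
          (by norm_num) hkernel
    _ ≤ (2 : NNReal) ^ (3 : ℝ) * C :=
        mul_le_mul_right (hCle _ (realCoords_mem_superellipsoid_iff.mpr hz)) _

end Boundary

theorem stmt14_general (m : ℝ) (hm : 1 < m) :
    ∃ C : ℝ, ∀ z ∈ bDm m,
      (∫⁻ w in bDm m,
          (ENNReal.ofReal |(w 0).re|) ^ (m - 2)
            * (ENNReal.ofReal ‖w - z‖) ^ (-2 : ℝ) ∂μH[3])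
        ≤ ENNReal.ofReal C ∧
      (∫⁻ w in bDm m,
          (ENNReal.ofReal |(w 0).re|) ^ (m - 2)
            * (ENNReal.ofReal ‖w - z‖) ^ (-2 : ℝ) ∂μH[3]) < ⊤ := by
  obtain ⟨C, hC, hCle⟩ := exists_forall_setLIntegral_bDm_le hm zero_le_two
    (by linarith [max_lt (show 2 - m < 1 by linarith) one_pos])
  refine ⟨C.toReal, fun z hz ↦ ⟨?_, (hCle z hz).trans_lt hC.lt_top⟩⟩
  rw [ENNReal.ofReal_toReal hC]
  exact hCle z hz

/-- Fix `3/2 < m < 2`. There is `C < ∞` such that for every `z ∈ bD_m`: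
`∫_{bD_m} |Re w₁|^{m−2}·|w−z|^{−2} dH³(w) ≤ C`; in particular this integral is finite
for every `z ∈ bD_m` (the integrand is `+∞` where singular). -/
theorem stmt14 (m : ℝ) (hm1 : 3 / 2 < m) (hm2 : m < 2) :
    ∃ C : ℝ, ∀ z ∈ bDm m,
      (∫⁻ w in bDm m,
          (ENNReal.ofReal |(w 0).re|) ^ (m - 2)
            * (ENNReal.ofReal ‖w - z‖) ^ (-2 : ℝ) ∂μH[3])
        ≤ ENNReal.ofReal C ∧
      (∫⁻ w in bDm m,
          (ENNReal.ofReal |(w 0).re|) ^ (m - 2)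
            * (ENNReal.ofReal ‖w - z‖) ^ (-2 : ℝ) ∂μH[3]) < ⊤ := by
  exact stmt14_general m (by linarith)

end
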